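/- There exist sequences of carefully synchronizing PFAs with only one undefined transition and exponential shortest carefully synchronizing word length: (i) there exist a constant c > 0 and an integer N such that for every n ≥ N there is a carefully synchronizing PFA with n states, an alphabet of 3 symbols, and exactly one undefined transition, whose shortest carefully synchronizing word has length at least c·3^{n/7}; (ii) there exist a constant c' > 0 and an integer N' such that for every n ≥ N' there is a carefully synchronizing PFA with n states, an alphabet of 2 symbols, and exactly one undefined transition, whose shortest carefully synchronizing word has length at least c'·2^{n/5}. -/

import Mathlib

/-- One step of a PFA on an `Option` state. -/
def pfaStep {Q σ : Type*} (δ : Q → σ → Option Q) (o : Option Q) (a : σ) : Option Q :=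
  o.bind fun q => δ q a

/-- The (partial) state reached from `q` after reading word `w` in the PFA `δ`. -/
def pfaRun {Q σ : Type*} (δ : Q → σ → Option Q) (q : Q) (w : List σ) : Option Q :=
  w.foldl (pfaStep δ) (some q)

/-- A word `w` is carefully synchronizing for the PFA `δ`. -/
def IsCareSyncWord {Q σ : Type*} (δ : Q → σ → Option Q) (w : List σ) : Prop :=
  ∃ qs : Q, ∀ q : Q, pfaRun δ q w = some qs

/-- A PFA is transitive if every state can be reached from every state by some word. -/
def PFATransitive {Q σ : Type*} (δ : Q → σ → Option Q) : Prop :=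
  ∀ q q' : Q, ∃ w : List σ, pfaRun δ q w = some q'

namespace RingCounter

/-- A state of the ring counter: `some (i, some d)` is the digit `d` at position `i`,
`some (i, none)` is the marker at position `i`, and `none` is an overfull digit, which can only
be at position `1`. -/
abbrev Cell (K S : ℕ) := Option (ZMod (K + 3) × Option (Fin (S + 2)))

variable {K S : ℕ}

/-- The digit `d` at position `i`; it is the overfull digit if `d` is not below the base. -/
def digit (i : ZMod (K + 3)) (d : ℕ) : Cell K S :=
  if h : d < S + 2 then some (i, some ⟨d, h⟩) else none

/-- The position of a state on the ring. -/
def loc : Cell K S → ZMod (K + 3)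
  | none => 1
  | some (i, _) => i

/-- Rotation of the ring by one position; an overfull digit is lost. -/
def rot : Cell K S → Cell K S
  | none => some (2, some 0)
  | some (i, v) => some (i + 1, v)

/-- Rotation together with a carry from position `1` to position `0`. It is blocked by a digit
at position `1` that is not overfull, and it sends a marker at position `0` to the place of the
digit that was at position `1`. -/
def fire : Cell K S → Option (Cell K S)
  | none => some (some (2, some 0))
  | some (i, none) => if i = 0 then some (some (2, some 0)) else some (some (i + 1, none))
  | some (i, some d) =>
    if i = 1 then none
    else if i = 0 then some (digit 1 (d + 1))
    else some (some (i + 1, some d))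

/-- The reset of the ring: a marker at position `1`, and zero digits elsewhere. -/
def reset (q : Cell K S) : Cell K S :=
  if loc q = 1 then some (1, none) else some (loc q, some 0)

lemma natCast_inj_of_lt {a b : ℕ} (ha : a < K + 3) (hb : b < K + 3) :
    (a : ZMod (K + 3)) = b ↔ a = b := by
  rw [ZMod.natCast_eq_natCast_iff', Nat.mod_eq_of_lt ha, Nat.mod_eq_of_lt hb]

lemma ring_size_eq_zero : (K : ZMod (K + 3)) + 3 = 0 := by
  exact_mod_cast ZMod.natCast_self (K + 3)

lemma zero_ne_one_ring : (0 : ZMod (K + 3)) ≠ 1 := by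
  have := (natCast_inj_of_lt (K := K) (a := 0) (b := 1) (by omega) (by omega)).not.2 (by omega)
  simpa using this

@[simp] lemma digit_of_lt {i : ZMod (K + 3)} {d : ℕ} (h : d < S + 2) :
    digit i d = (some (i, some ⟨d, h⟩) : Cell K S) := dif_pos h

lemma digit_base (i : ZMod (K + 3)) : digit i (S + 2) = (none : Cell K S) := by
  simp [digit]

lemma digit_zero (i : ZMod (K + 3)) : digit i 0 = (some (i, some 0) : Cell K S) := by
  rw [digit_of_lt (by omega)]; rfl

lemma rot_digit {i : ZMod (K + 3)} {d : ℕ} (h : d < S + 2) :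
    rot (digit i d : Cell K S) = digit (i + 1) d := by
  simp [digit_of_lt h, rot]

lemma fire_digit {i : ZMod (K + 3)} {d : ℕ} (h : d < S + 2) (h0 : i ≠ 0) (h1 : i ≠ 1) :
    fire (digit i d : Cell K S) = some (digit (i + 1) d) := by
  simp [digit_of_lt h, fire, h0, h1]

lemma fire_digit_at_zero {d : ℕ} (h : d < S + 2) :
    fire (digit 0 d : Cell K S) = some (digit 1 (d + 1)) := by
  simp [digit_of_lt h, fire, zero_ne_one_ring]

lemma fire_digit_at_one {d : ℕ} (h : d < S + 2) : fire (digit 1 d : Cell K S) = none := by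
  simp [digit_of_lt h, fire]

lemma fire_marker {i : ZMod (K + 3)} (h : i ≠ 0) :
    fire (some (i, none) : Cell K S) = some (some (i + 1, none)) := by
  simp [fire, h]

/-- The position of the digit with index `j` when the marker is at position `p`. -/
def slot (p : ZMod (K + 3)) (j : ℕ) : ZMod (K + 3) := p - (j + 1)

lemma slot_add_one (p : ZMod (K + 3)) (j : ℕ) : slot (p + 1) j = slot p j + 1 := by
  unfold slot; ring

lemma slot_eq_one_iff {u j : ℕ} (hu : u < K + 3) (hj : j < K + 2) :
    slot (u : ZMod (K + 3)) j = 1 ↔ u = j + 2 ∨ (u = 0 ∧ j = K + 1) := by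
  rw [slot, sub_eq_iff_eq_add]
  by_cases h : j + 2 < K + 3
  · rw [show (1 : ZMod (K + 3)) + (j + 1) = ((j + 2 : ℕ) : ZMod (K + 3)) by push_cast; ring,
      natCast_inj_of_lt hu h]
    omega
  · obtain rfl : j = K + 1 := by omega
    rw [show (1 : ZMod (K + 3)) + ((K + 1 : ℕ) + 1) = ((0 : ℕ) : ZMod (K + 3)) by
      push_cast; rw [← ring_size_eq_zero (K := K)]; ring, natCast_inj_of_lt hu (by omega)]
    omega

lemma slot_eq_zero_iff {u j : ℕ} (hu : u < K + 3) (hj : j < K + 2) :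
    slot (u : ZMod (K + 3)) j = 0 ↔ u = j + 1 := by
  rw [slot, sub_eq_zero, ← natCast_inj_of_lt hu (show j + 1 < K + 3 by omega)]
  push_cast
  rfl

/-- Effect of `fire` on the digits when digit `u` is at position `0` and no lower digit is
present. -/
lemma fire_increment {u j : ℕ} {d : ℕ → ℕ} (hd : d j < S + 2) (hu : u < K + 2)
    (huj : u ≤ j) (hj : j < K + 2) :
    fire (digit (slot (u + 1) j) (d j) : Cell K S) =
      some (digit (slot (u + 1 + 1) j) (Function.update d u (d u + 1) j)) := by
  have e : (u : ZMod (K + 3)) + 1 = ((u + 1 : ℕ) : ZMod (K + 3)) := by push_cast; rfl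
  rw [slot_add_one (_ + 1), e]
  by_cases h : j = u
  · subst h
    rw [(slot_eq_zero_iff (by omega) hj).2 rfl, fire_digit_at_zero hd]
    simp
  · rw [fire_digit hd, Function.update_of_ne h]
    · rw [ne_eq, slot_eq_zero_iff (by omega) hj]; omega
    · rw [ne_eq, slot_eq_one_iff (by omega) hj]; omega

/-- Effect of `fire` on the digits when digit `u` is overfull and at position `1`. -/
lemma fire_carry {u j : ℕ} {d : ℕ → ℕ} (hd : ∀ i < K + 2, i ≠ u → d i < S + 2)
    (hdu : d u = S + 2) (hu : u < K + 1) (hj : j < K + 2) :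
    fire (digit (slot (u + 2) j) (d j) : Cell K S) =
      some (digit (slot (u + 2 + 1) j)
        (Function.update (Function.update d u 0) (u + 1) (d (u + 1) + 1) j)) := by
  have e : (u : ZMod (K + 3)) + 2 = ((u + 2 : ℕ) : ZMod (K + 3)) := by push_cast; rfl
  rw [slot_add_one]
  by_cases h : j = u
  · subst h
    rw [hdu, digit_base, Function.update_of_ne (by omega), Function.update_self, digit_zero,
      e, (slot_eq_one_iff (by omega) hj).2 (.inl rfl), one_add_one_eq_two]
    rfl
  by_cases h' : j = u + 1
  · subst h'
    rw [e, (slot_eq_zero_iff (by omega) hj).2 rfl, fire_digit_at_zero (hd _ hj h),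
      Function.update_self, zero_add]
  · rw [fire_digit (hd j hj h), Function.update_of_ne h', Function.update_of_ne h]
    · rw [e, ne_eq, slot_eq_zero_iff (by omega) hj]; omega
    · rw [e, ne_eq, slot_eq_one_iff (by omega) hj]; omega

/-- The elementary moves of the ring counter. -/
def IsMove (e : Cell K S → Option (Cell K S)) : Prop :=
  e = some ∨ e = some ∘ rot ∨ e = fire ∨ e = some ∘ reset

/-- A set of states covers a configuration of the counter, with a marker and all digits present,
whose value is at most `t`. -/
def Covers (R : Cell K S → Prop) (t : ℕ) : Prop :=
  ∃ (p : ZMod (K + 3)) (d : ℕ → ℕ), R (some (p, none)) ∧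
    (∀ j < K + 2, R (digit (slot p j) (d j))) ∧
    (∀ j < K + 2, d j < S + 2 ∨ (d j = S + 2 ∧ slot p j = 1)) ∧
    ∑ j ∈ Finset.range (K + 2), d j * (S + 2) ^ j ≤ t

lemma Covers.mono {R R' : Cell K S → Prop} {t t' : ℕ} (h : Covers R t) (hR : ∀ q, R q → R' q)
    (ht : t ≤ t') : Covers R' t' := by
  obtain ⟨p, d, hm, hd, hv, hs⟩ := h
  exact ⟨p, d, hR _ hm, fun j hj => hR _ (hd j hj), hv, hs.trans ht⟩

lemma sum_update_succ (d : ℕ → ℕ) {n u : ℕ} (hu : u < n) (b v : ℕ) :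
    ∑ j ∈ Finset.range n, Function.update d u v j * b ^ j + d u * b ^ u =
      ∑ j ∈ Finset.range n, d j * b ^ j + v * b ^ u := by
  have hu' := Finset.mem_range.2 hu
  rw [← Finset.add_sum_erase _ _ hu', ← Finset.add_sum_erase _ (fun j => d j * b ^ j) hu',
    Finset.sum_congr rfl fun j hj => by
      rw [Function.update_of_ne (Finset.ne_of_mem_erase hj)], Function.update_self]
  ring

lemma covers_reset {R : Cell K S → Prop} (hm : R (some (1, none)))
    (hR : ∀ i : ZMod (K + 3), i ≠ 1 → R (some (i, some 0))) : Covers R 0 := by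
  refine ⟨1, fun _ => 0, hm, fun j hj => ?_, fun j _ => .inl (Nat.succ_pos _), by simp⟩
  rw [digit_zero]
  refine hR _ fun h => ?_
  have := slot_eq_one_iff (K := K) (u := 1) (by omega) hj
  rw [Nat.cast_one] at this
  have := this.1 h
  omega

lemma Covers.rot {R : Cell K S → Prop} {t : ℕ} (h : Covers R t) :
    Covers (fun q' => ∃ q, R q ∧ rot q = q') t := by
  obtain ⟨p, d, hm, hd, hv, hs⟩ := h
  refine ⟨p + 1, fun j => if d j = S + 2 then 0 else d j, ⟨_, hm, rfl⟩, fun j hj => ?_,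
    fun j hj => .inl ?_, le_trans (Finset.sum_le_sum fun j _ => ?_) hs⟩
  · refine ⟨_, hd j hj, ?_⟩
    rw [slot_add_one]
    dsimp only
    rcases hv j hj with hlt | ⟨heq, h1⟩
    · rw [if_neg hlt.ne, rot_digit hlt]
    · rw [if_pos heq, heq, digit_base, h1, digit_zero, one_add_one_eq_two]
      rfl
  · have := hv j hj
    dsimp only
    split_ifs <;> omega
  · dsimp only
    gcongr
    split_ifs <;> omega

lemma Covers.fire {R : Cell K S → Prop} {t : ℕ} (h : Covers R t)
    (hdef : ∀ q, R q → fire q ≠ none) (ht : t < (S + 2) ^ (K + 2)) :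
    Covers (fun q' => ∃ q, R q ∧ fire q = some q') (t + 1) := by
  obtain ⟨p, d, hm, hd, hv, hs⟩ := h
  obtain ⟨u, hu, rfl⟩ : ∃ u : ℕ, u < K + 3 ∧ (u : ZMod (K + 3)) = p :=
    ⟨p.val, p.val_lt, ZMod.natCast_zmod_val p⟩
  have overfull : ∀ j < K + 2, slot (u : ZMod (K + 3)) j = 1 → d j = S + 2 := by
    intro j hj h1
    rcases hv j hj with hlt | heq
    · exact absurd (by rw [h1, fire_digit_at_one hlt]) (hdef _ (hd j hj))
    · exact heq.1
  have marker : u ≠ 0 →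
      ∃ q, R q ∧ RingCounter.fire q = some (some ((u : ZMod (K + 3)) + 1, none)) := by
    intro h0
    refine ⟨_, hm, fire_marker fun h => h0 ?_⟩
    rw [← Nat.cast_zero] at h
    exact (natCast_inj_of_lt hu (by omega)).1 h
  rcases Nat.eq_zero_or_pos u with rfl | hpos
  · exfalso
    have hK := overfull (K + 1) (by omega) ((slot_eq_one_iff hu (by omega)).2 (.inr ⟨rfl, rfl⟩))
    have := Finset.single_le_sum (f := fun j => d j * (S + 2) ^ j) (fun _ _ => Nat.zero_le _)
      (Finset.mem_range.2 (show K + 1 < K + 2 by omega))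
    rw [hK, ← pow_succ'] at this
    exact absurd (this.trans hs) (not_le.2 ht)
  obtain rfl | ⟨v, rfl⟩ : u = 1 ∨ ∃ v, u = v + 2 := by
    rcases u with _ | _ | v
    · omega
    · exact .inl rfl
    · exact .inr ⟨v, rfl⟩
  · have hq : ∀ j < K + 2, d j < S + 2 := fun j hj => (hv j hj).resolve_right fun h => by
      have := (slot_eq_one_iff hu hj).1 h.2
      omega
    have h01 : ((1 : ℕ) : ZMod (K + 3)) = ((0 : ℕ) : ZMod (K + 3)) + 1 := by simp
    refine ⟨((1 : ℕ) : ZMod (K + 3)) + 1, Function.update d 0 (d 0 + 1), marker (by omega),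
      fun j hj => ⟨_, hd j hj, ?_⟩, fun j hj => ?_, ?_⟩
    · rw [h01]
      exact fire_increment (hq j hj) (by omega) (by omega) hj
    · rcases eq_or_ne j 0 with rfl | hj0
      · have := hq 0 hj
        rw [Function.update_self]
        have : slot (((1 : ℕ) : ZMod (K + 3)) + 1) 0 = 1 := by simp [slot]
        simp only [this, and_true]
        omega
      · rw [Function.update_of_ne hj0]
        exact .inl (hq j hj)
    · have := sum_update_succ d (show 0 < K + 2 by omega) (S + 2) (d 0 + 1)
      simp only [pow_zero, mul_one] at this
      omega
  · have hdv := overfull v (by omega) ((slot_eq_one_iff hu (by omega)).2 (.inl rfl))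
    have hq : ∀ j < K + 2, j ≠ v → d j < S + 2 := fun j hj hne => (hv j hj).resolve_right
      fun h => by
        have := (slot_eq_one_iff hu hj).1 h.2
        omega
    have hcast : ((v + 2 : ℕ) : ZMod (K + 3)) = v + 2 := by push_cast; rfl
    refine ⟨((v + 2 : ℕ) : ZMod (K + 3)) + 1,
      Function.update (Function.update d v 0) (v + 1) (d (v + 1) + 1), marker (by omega),
      fun j hj => ⟨_, hd j hj, ?_⟩, fun j hj => ?_, ?_⟩
    · rw [hcast]
      exact fire_carry hq hdv (by omega) hj
    · rcases eq_or_ne j (v + 1) with rfl | hj1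
      · have := hq _ hj (by omega)
        have h1 : slot (((v + 2 : ℕ) : ZMod (K + 3)) + 1) (v + 1) = 1 := by
          unfold slot; push_cast; ring
        rw [Function.update_self]
        simp only [h1, and_true]
        omega
      · rw [Function.update_of_ne hj1]
        left
        rcases eq_or_ne j v with rfl | hjv
        · simp
        · rw [Function.update_of_ne hjv]
          exact hq j hj hjv
    · have h1 := sum_update_succ d (show v < K + 2 by omega) (S + 2) 0
      have h2 := sum_update_succ (Function.update d v 0) (show v + 1 < K + 2 by omega) (S + 2)
        (d (v + 1) + 1)
      rw [Function.update_of_ne (by omega)] at h2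
      rw [hdv] at h1
      have h3 : (d (v + 1) + 1) * (S + 2) ^ (v + 1) =
          d (v + 1) * (S + 2) ^ (v + 1) + (S + 2) * (S + 2) ^ v := by ring
      omega

lemma Covers.move {R : Cell K S → Prop} {t : ℕ} (h : Covers R t)
    {e : Cell K S → Option (Cell K S)} (he : IsMove e)
    (hdef : ∀ q, R q → e q ≠ none) (ht : t < (S + 2) ^ (K + 2)) :
    Covers (fun q' => ∃ q, R q ∧ e q = some q') (t + 1) := by
  rcases he with rfl | rfl | rfl | rfl
  · exact h.mono (fun q hq => ⟨q, hq, rfl⟩) (by omega)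
  · exact h.rot.mono (fun q ⟨q', hq, h⟩ => ⟨q', hq, congrArg some h⟩) (by omega)
  · exact h.fire hdef ht
  · obtain ⟨p, d, hm, hd, hv, -⟩ := h
    have all : ∀ i : ZMod (K + 3), ∃ q, R q ∧ loc q = i := by
      intro i
      obtain ⟨u, hu, hui⟩ : ∃ u : ℕ, u < K + 3 ∧ (u : ZMod (K + 3)) = p - i :=
        ⟨(p - i).val, (p - i).val_lt, ZMod.natCast_zmod_val _⟩
      rcases u with _ | j
      · exact ⟨_, hm, by rw [Nat.cast_zero] at hui; exact sub_eq_zero.1 hui.symm⟩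
      · have hs : slot p j = i := by
          push_cast at hui
          rw [slot, hui]; ring
        refine ⟨_, hd j (by omega), ?_⟩
        rcases hv j (by omega) with hlt | ⟨heq, h1⟩
        · rw [digit_of_lt hlt, hs]; rfl
        · rw [heq, digit_base, ← hs, h1]; rfl
    refine (covers_reset ?_ fun i hi => ?_).mono (fun _ h => h) (by omega)
    · obtain ⟨q, hq, hl⟩ := all 1
      exact ⟨q, hq, by simp [reset, hl]⟩
    · obtain ⟨q, hq, hl⟩ := all i
      exact ⟨q, hq, by simp [reset, hl, hi]⟩

/-- The PFA `δ` simulates the ring counter: in both phases `φ`, the lifts of the states of the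
ring counter are mapped by the letters according to the moves of the counter, and in the
phase `false` all moves that are needed to run the counter are available as words. -/
structure Simulates {Q Λ : Type*} (δ : Q → Λ → Option Q) (lift : Bool → Cell K S → Q) :
    Prop where
  step : ∀ φ l, ∃ φ' e, IsMove e ∧ ∀ q, δ (lift φ q) l = (e q).map (lift φ')
  marker : ∀ φ i q, lift φ q = lift φ (some (i, none)) → q = some (i, none)
  rotate : ∃ w, ∀ q, pfaRun δ (lift false q) w = some (lift false (rot q))
  carry : ∃ w, ∀ q, pfaRun δ (lift false q) w = (fire q).map (lift false)
  restart : ∃ w, ∀ q, pfaRun δ (lift false q) w = (fire (reset q)).map (lift false)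
  collect : ∃ w, ∀ q, ∃ c, pfaRun δ q w = some (lift false c)

section Simulates

variable {Q Λ : Type*} {δ : Q → Λ → Option Q} {lift : Bool → Cell K S → Q}

lemma pfaRun_concat (q : Q) (w : List Λ) (l : Λ) :
    pfaRun δ q (w ++ [l]) = (pfaRun δ q w).bind fun q' => δ q' l := by
  simp [pfaRun, pfaStep]

lemma pfaRun_append {q q' : Q} {w : List Λ} (h : pfaRun δ q w = some q') (v : List Λ) :
    pfaRun δ q (w ++ v) = pfaRun δ q' v := by
  unfold pfaRun at h ⊢
  rw [List.foldl_append, h]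

lemma Simulates.covers (h : Simulates δ lift) (w : List Λ) (hw : w.length ≤ (S + 2) ^ (K + 2))
    (hdef : ∀ q, pfaRun δ q w ≠ none) :
    ∃ φ, Covers (fun c => ∃ q, pfaRun δ q w = some (lift φ c)) w.length := by
  induction w using List.reverseRecOn with
  | nil => exact ⟨false, covers_reset ⟨_, rfl⟩ fun _ _ => ⟨_, rfl⟩⟩
  | append_singleton w l ih =>
    rw [List.length_append, List.length_singleton] at hw ⊢
    obtain ⟨φ, hφ⟩ := ih (by omega) fun q hq => hdef q (by rw [pfaRun_concat, hq]; rfl)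
    obtain ⟨φ', e, he, hstep⟩ := h.step φ l
    refine ⟨φ', (hφ.move he ?_ hw).mono ?_ le_rfl⟩
    · rintro c ⟨q, hq⟩ hc
      exact hdef q (by rw [pfaRun_concat, hq, Option.bind_some, hstep, hc]; rfl)
    · rintro c' ⟨c, ⟨q, hq⟩, hc⟩
      exact ⟨q, by rw [pfaRun_concat, hq, Option.bind_some, hstep, hc]; rfl⟩

theorem Simulates.le_length (h : Simulates δ lift) {w : List Λ} (hw : IsCareSyncWord δ w) :
    (S + 2) ^ (K + 2) ≤ w.length := by
  obtain ⟨qs, hqs⟩ := hw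
  by_contra! hlt
  obtain ⟨φ, p, d, ⟨q, hq⟩, hd, -⟩ := h.covers w hlt.le fun q => by simp [hqs q]
  obtain ⟨q', hq'⟩ := hd 0 (by omega)
  rw [hqs] at hq hq'
  have := h.marker φ p _ (Option.some.inj (hq'.symm.trans hq))
  unfold digit at this
  split_ifs at this
  simp at this

/-- Some word sends all states of `A` into `B`, on the lifts in phase `false`. -/
def Reach (δ : Q → Λ → Option Q) (lift : Bool → Cell K S → Q) (A B : Set (Cell K S)) : Prop :=
  ∃ w, ∀ q ∈ A, ∃ q' ∈ B, pfaRun δ (lift false q) w = some (lift false q')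

lemma Reach.trans {A B C : Set (Cell K S)} (h : Reach δ lift A B) (h' : Reach δ lift B C) :
    Reach δ lift A C := by
  obtain ⟨w, hw⟩ := h
  obtain ⟨v, hv⟩ := h'
  refine ⟨w ++ v, fun q hq => ?_⟩
  obtain ⟨q', hq', h1⟩ := hw q hq
  rw [pfaRun_append h1]
  exact hv q' hq'

lemma Reach.of_subset {A B : Set (Cell K S)} (h : A ⊆ B) : Reach δ lift A B :=
  ⟨[], fun q hq => ⟨q, h hq, rfl⟩⟩

lemma Simulates.reach_rot (h : Simulates δ lift) {A B : Set (Cell K S)}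
    (hAB : ∀ q ∈ A, rot q ∈ B) : Reach δ lift A B :=
  h.rotate.imp fun _ hw q hq => ⟨_, hAB q hq, hw q⟩

lemma Simulates.reach_fire (h : Simulates δ lift) {A B : Set (Cell K S)}
    (hAB : ∀ q ∈ A, ∃ q' ∈ B, fire q = some q') : Reach δ lift A B := by
  refine h.carry.imp fun w hw q hq => ?_
  obtain ⟨q', hq', he⟩ := hAB q hq
  exact ⟨q', hq', by rw [hw, he]; rfl⟩

lemma Simulates.reach_restart (h : Simulates δ lift) {A B : Set (Cell K S)}
    (hAB : ∀ q ∈ A, ∃ q' ∈ B, fire (reset q) = some q') : Reach δ lift A B := by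
  refine h.restart.imp fun w hw q hq => ?_
  obtain ⟨q', hq', he⟩ := hAB q hq
  exact ⟨q', hq', by rw [hw, he]; rfl⟩

/-- The configuration with the marker at `p` and digits `d j` for all `j ≥ lo`. -/
def conf (lo : ℕ) (p : ZMod (K + 3)) (d : ℕ → ℕ) : Set (Cell K S) :=
  {q | q = some (p, none) ∨ ∃ j, lo ≤ j ∧ j < K + 2 ∧ q = digit (slot p j) (d j)}

lemma Simulates.reach_conf (h : Simulates δ lift) (lo : ℕ) {d : ℕ → ℕ} (hd : ∀ j, d j < S + 2)
    (p p' : ZMod (K + 3)) : Reach δ lift (conf lo p d) (conf lo p' d) := by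
  suffices ∀ n : ℕ, Reach δ lift (conf lo p d) (conf lo (p + n) d) by
    simpa using this (p' - p).val
  intro n
  induction n with
  | zero => exact .of_subset (by simp)
  | succ n ih =>
    refine ih.trans (h.reach_rot ?_)
    rw [Nat.cast_succ, ← add_assoc]
    rintro q (rfl | ⟨j, h1, h2, rfl⟩)
    · exact .inl rfl
    · exact .inr ⟨j, h1, h2, by rw [rot_digit (hd j), slot_add_one]⟩

lemma natCast_succ_ne_zero {u : ℕ} (hu : u + 1 < K + 3) : (u : ZMod (K + 3)) + 1 ≠ 0 := by
  have := (natCast_inj_of_lt hu (show 0 < K + 3 by omega)).not.2 (by omega)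
  simpa using this

lemma Simulates.reach_increment (h : Simulates δ lift) {lo : ℕ} (hlo : lo < K + 2) {d : ℕ → ℕ}
    (hd : ∀ j, d j < S + 2) :
    Reach δ lift (conf lo (lo + 1) d) (conf lo (lo + 2) (Function.update d lo (d lo + 1))) := by
  rw [show (lo : ZMod (K + 3)) + 2 = lo + 1 + 1 by ring]
  refine h.reach_fire ?_
  rintro q (rfl | ⟨j, h1, h2, rfl⟩)
  · exact ⟨_, .inl rfl, fire_marker (natCast_succ_ne_zero (by omega))⟩
  · exact ⟨_, .inr ⟨j, h1, h2, rfl⟩, fire_increment (hd j) hlo h1 h2⟩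

lemma Simulates.reach_carry (h : Simulates δ lift) (lo : ℕ) {u : ℕ} (hu : u < K + 1) {d : ℕ → ℕ}
    (hd : ∀ j, j ≠ u → d j < S + 2) (hdu : d u = S + 2) :
    Reach δ lift (conf lo (u + 2) d)
      (conf lo (u + 2 + 1) (Function.update (Function.update d u 0) (u + 1) (d (u + 1) + 1))) := by
  refine h.reach_fire ?_
  rintro q (rfl | ⟨j, h1, h2, rfl⟩)
  · refine ⟨_, .inl rfl, fire_marker ?_⟩
    have := natCast_succ_ne_zero (K := K) (u := u + 1) (by omega)
    push_cast at this
    rwa [add_assoc, one_add_one_eq_two] at this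
  · exact ⟨_, .inr ⟨j, h1, h2, rfl⟩, fire_carry (fun i _ => hd i) hdu hu h2⟩

/-- Any digit can be made overfull without changing higher digits. -/
lemma Simulates.reach_overfull (h : Simulates δ lift) (lo : ℕ) {u : ℕ} (hlo : lo ≤ u)
    (hu : u < K + 2) (d : ℕ → ℕ) (hd : ∀ j, d j < S + 2) (p : ZMod (K + 3)) :
    ∃ d' : ℕ → ℕ, (∀ j, u < j → d' j = d j) ∧ d' u = S + 2 ∧ (∀ j, j ≠ u → d' j < S + 2) ∧
      Reach δ lift (conf lo p d) (conf lo (u + 2) d') := by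
  induction u, hlo using Nat.le_induction generalizing d p with
  | base =>
    obtain ⟨m, hm⟩ : ∃ m, d lo + m + 1 = S + 2 := ⟨S + 1 - d lo, by have := hd lo; omega⟩
    induction m generalizing d p with
    | zero =>
      refine ⟨_, fun j hj => Function.update_of_ne (by omega) _ _, ?_, fun j hj => ?_,
        (h.reach_conf lo hd p _).trans (h.reach_increment hu hd)⟩
      · rw [Function.update_self]; omega
      · rw [Function.update_of_ne hj]; exact hd j
    | succ m ih =>
      obtain ⟨d', h1, h2, h3, h4⟩ := ih (Function.update d lo (d lo + 1)) (fun j => by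
        rcases eq_or_ne j lo with rfl | hj
        · rw [Function.update_self]; omega
        · rw [Function.update_of_ne hj]; exact hd j) (lo + 2) (by rw [Function.update_self]; omega)
      refine ⟨d', fun j hj => ?_, h2, h3,
        ((h.reach_conf lo hd p _).trans (h.reach_increment hu hd)).trans h4⟩
      rw [h1 j hj, Function.update_of_ne (by omega)]
  | succ u hlo ihu =>
    have carry : ∀ (d : ℕ → ℕ) (p : ZMod (K + 3)), (∀ j, d j < S + 2) → ∃ d' : ℕ → ℕ,
        (∀ j, u + 1 < j → d' j = d j) ∧ d' (u + 1) = d (u + 1) + 1 ∧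
        (∀ j, j ≠ u + 1 → d' j < S + 2) ∧
        Reach δ lift (conf lo p d) (conf lo ((u + 1 : ℕ) + 2) d') := by
      intro d p hd
      obtain ⟨d', h1, h2, h3, h4⟩ := ihu (by omega) d hd p
      refine ⟨_, fun j hj => ?_, ?_, fun j hj => ?_,
        h4.trans (by simpa [add_right_comm] using h.reach_carry lo (by omega) h3 h2)⟩
      · rw [Function.update_of_ne (by omega), Function.update_of_ne (by omega), h1 j (by omega)]
      · rw [Function.update_self, h1 _ (by omega)]
      · rw [Function.update_of_ne hj]
        rcases eq_or_ne j u with rfl | hju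
        · simp
        · rw [Function.update_of_ne hju]; exact h3 j hju
    obtain ⟨m, hm⟩ : ∃ m, d (u + 1) + m + 1 = S + 2 :=
      ⟨S + 1 - d (u + 1), by have := hd (u + 1); omega⟩
    induction m generalizing d p with
    | zero =>
      obtain ⟨d', h1, h2, h3, h4⟩ := carry d p hd
      exact ⟨d', h1, by omega, h3, h4⟩
    | succ m ih =>
      obtain ⟨d', h1, h2, h3, h4⟩ := carry d p hd
      obtain ⟨d'', g1, g2, g3, g4⟩ := ih d' (fun j => by
        rcases eq_or_ne j (u + 1) with rfl | hj
        · omega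
        · exact h3 j hj) _ (by omega)
      exact ⟨d'', fun j hj => (g1 j hj).trans (h1 j hj), g2, g3, h4.trans g4⟩

/-- The states at the positions `1, …, L`. -/
def arc (L : ℕ) : Set (Cell K S) := {q | ∃ i : ℕ, 1 ≤ i ∧ i ≤ L ∧ loc q = i}

lemma loc_rot (q : Cell K S) : loc (rot q) = loc q + 1 := by
  rcases q with _ | ⟨i, v⟩
  · exact one_add_one_eq_two.symm
  · rfl

lemma Simulates.reach_rot_iterate (h : Simulates δ lift) (A : Set (Cell K S)) (n : ℕ) :
    Reach δ lift A {q | ∃ q' ∈ A, loc q = loc q' + n} := by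
  induction n with
  | zero => exact .of_subset fun q hq => ⟨q, hq, by simp⟩
  | succ n ih =>
    refine ih.trans (h.reach_rot ?_)
    rintro q ⟨q', hq', hl⟩
    exact ⟨q', hq', by rw [loc_rot, hl]; push_cast; ring⟩

/-- A full run of the counter removes one state from the ring. -/
lemma Simulates.reach_arc (h : Simulates δ lift) {L : ℕ} (hL : 1 ≤ L) (hLK : L + 1 ≤ K + 3) :
    Reach δ lift (arc (L + 1)) (arc L) := by
  have hK := ring_size_eq_zero (K := K)
  have start : Reach δ lift (arc (L + 1))
      (conf (K + 2 - L) (0 + 1 + 1) (Function.update (fun _ => 0) 0 1)) := by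
    refine h.reach_restart ?_
    rintro q ⟨i, hi, hiL, hl⟩
    rcases eq_or_ne i 1 with rfl | hi1
    · refine ⟨_, .inl rfl, ?_⟩
      rw [reset, if_pos (by simpa using hl), fire_marker zero_ne_one_ring.symm, zero_add]
    · refine ⟨_, .inr ⟨K + 3 - i, by omega, by omega, rfl⟩, ?_⟩
      have hs : slot (((0 : ℕ) : ZMod (K + 3)) + 1) (K + 3 - i) = i := by
        rw [slot, Nat.cast_sub (by omega)]
        push_cast
        rw [hK]; ring
      have hne : (i : ZMod (K + 3)) ≠ 1 := by
        intro h1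
        have := (slot_eq_one_iff (K := K) (u := 1) (j := K + 3 - i) (by omega) (by omega)).1
          (by simpa using hs.trans h1)
        omega
      have := fire_increment (K := K) (S := S) (u := 0) (j := K + 3 - i) (d := fun _ => 0)
        (Nat.succ_pos _) (by omega) (by omega) (by omega)
      rw [hs, digit_zero, Nat.cast_zero] at this
      rw [reset, if_neg (by rwa [hl]), hl, this]
  obtain ⟨d', -, h2, h3, h4⟩ := h.reach_overfull (K + 2 - L) (u := K + 1) (by omega) (by omega)
    (Function.update (fun _ => 0) 0 1) (fun j => by
      rcases eq_or_ne j 0 with rfl | hj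
      · rw [Function.update_self]; omega
      · rw [Function.update_of_ne hj]; omega) (0 + 1 + 1)
  have merge : Reach δ lift (conf (K + 2 - L) ((K + 1 : ℕ) + 2) d')
      {q | ∃ i : ℕ, 2 ≤ i ∧ i ≤ L + 1 ∧ loc q = i} := by
    have hz : (((K + 1 : ℕ) : ZMod (K + 3)) + 2) = ((0 : ℕ) : ZMod (K + 3)) := by
      push_cast; rw [← hK]; ring
    rw [hz]
    refine h.reach_fire ?_
    rintro q (rfl | ⟨j, h1, hj, rfl⟩)
    · exact ⟨some (2, some 0), ⟨2, le_rfl, by omega, by simp [loc]⟩, by simp [fire]⟩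
    rcases eq_or_ne j (K + 1) with rfl | hjK
    · exact ⟨some (2, some 0), ⟨2, le_rfl, by omega, by simp [loc]⟩, by
        rw [h2, digit_base]; rfl⟩
    · refine ⟨_, ⟨K + 3 - j, by omega, by omega, ?_⟩, fire_digit (h3 j hjK) ?_ ?_⟩
      · rw [digit_of_lt (h3 j hjK), Nat.cast_sub (by omega)]
        simp only [loc, slot]
        push_cast
        rw [hK]; ring
      · rw [ne_eq, slot_eq_zero_iff (by omega) hj]; omega
      · rw [ne_eq, slot_eq_one_iff (by omega) hj]; omega
  refine ((start.trans h4).trans merge).trans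
    ((h.reach_rot_iterate _ (K + 2)).trans (.of_subset ?_))
  rintro q ⟨q', ⟨i, hi, hiL, hl⟩, hq⟩
  refine ⟨i - 1, by omega, by omega, ?_⟩
  rw [hq, hl, Nat.cast_sub (by omega)]
  push_cast
  linear_combination hK

lemma Simulates.reach_singleton (h : Simulates δ lift) {L : ℕ} (hL : 1 ≤ L) (hLK : L ≤ K + 3) :
    Reach δ lift (arc L) {some (2, none)} := by
  induction L, hL using Nat.le_induction with
  | base =>
    refine h.reach_restart ?_
    rintro q ⟨i, hi, hi', hl⟩
    obtain rfl : i = 1 := by omega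
    refine ⟨_, rfl, ?_⟩
    rw [reset, if_pos (by simpa using hl), fire_marker zero_ne_one_ring.symm, one_add_one_eq_two]
  | succ L hL ih => exact (h.reach_arc hL hLK).trans (ih (by omega))

theorem Simulates.exists_isCareSyncWord (h : Simulates δ lift) : ∃ w, IsCareSyncWord δ w := by
  obtain ⟨w, hw⟩ := h.collect
  obtain ⟨v, hv⟩ := h.reach_singleton (L := K + 3) (by omega) le_rfl
  refine ⟨w ++ v, lift false (some (2, none)), fun q => ?_⟩
  obtain ⟨c, hc⟩ := hw q
  have hmem : c ∈ (arc (K + 3) : Set (Cell K S)) := by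
    rcases eq_or_ne (loc c).val 0 with h0 | h0
    · refine ⟨K + 3, by omega, le_rfl, ?_⟩
      rw [(ZMod.val_eq_zero _).1 h0]
      exact (ZMod.natCast_self _).symm
    · exact ⟨(loc c).val, by omega, (loc c).val_lt.le, (ZMod.natCast_zmod_val _).symm⟩
  obtain ⟨c', rfl, hc'⟩ := hv c hmem
  rw [pfaRun_append hc, hc']

end Simulates

/-- The states on which the upper phase differs from the lower phase: all states if `t` is true,
and those at the positions `0` and `1` otherwise. -/
def InWindow (t : Bool) (q : Cell K S) : Prop := t = true ∨ loc q = 0 ∨ loc q = 1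

instance (t : Bool) (q : Cell K S) : Decidable (InWindow t q) :=
  inferInstanceAs (Decidable (_ ∨ _ ∨ _))

/-- The states of the machine: the lower phase, the upper phase, and `e` dummy states. -/
abbrev Mach (t : Bool) (K S e : ℕ) := Cell K S ⊕ {q : Cell K S // InWindow t q} ⊕ Fin e

/-- All states that block `fire` are merged into a single one. -/
def merge (q : Cell K S) : Cell K S := if fire q = none then some (1, some 0) else q

/-- The state of the machine that represents `q` in the upper phase. -/
def upper (t : Bool) (e : ℕ) (q : Cell K S) : Mach t K S e :=
  if h : InWindow t (merge q) then .inr (.inl ⟨merge q, h⟩) else .inl (merge q)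

/-- The state of the machine that represents `q` in the given phase. -/
def lift (t : Bool) (e : ℕ) : Bool → Cell K S → Mach t K S e
  | false, q => .inl q
  | true, q => upper t e q

/-- The transitions of the machine. The letter `0` rotates in the lower phase and fires in the
upper phase, `1` changes from the lower to the upper phase, and `2` resets. If `t` is true, then
`1` resets as well in the upper phase. -/
def trans (t : Bool) (e : ℕ) : Mach t K S e → Fin 3 → Option (Mach t K S e)
  | .inl q, 0 => some (.inl (rot q))
  | .inl q, 1 => some (upper t e q)
  | .inl q, 2 => some (.inl (reset q))
  | .inr (.inl w), 0 =>
    if w.1 = some (1, some 0) then none else some (.inl ((fire w.1).getD none))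
  | .inr (.inl w), 1 => some (if t then upper t e (reset w.1) else .inr (.inl w))
  | .inr (.inl w), 2 => some (.inl (reset w.1))
  | .inr (.inr _), _ => some (.inl none)

lemma fire_eq_none_iff {q : Cell K S} : fire q = none ↔ ∃ d, q = some (1, some d) := by
  rcases q with _ | ⟨i, _ | d⟩
  · simp [fire]
  · simp only [fire]; split_ifs <;> simp
  · simp only [fire]; split_ifs <;> simp_all

lemma loc_merge (q : Cell K S) : loc (merge q) = loc q := by
  unfold merge
  split_ifs with h
  · obtain ⟨d, rfl⟩ := fire_eq_none_iff.1 h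
    rfl
  · rfl

lemma reset_merge (q : Cell K S) : reset (merge q) = reset q := by
  simp only [reset, loc_merge]

lemma merge_of_fire_ne_none {q : Cell K S} (h : fire q ≠ none) : merge q = q := if_neg h

lemma merge_eq_iff {q : Cell K S} : merge q = some (1, some 0) ↔ fire q = none := by
  refine ⟨fun h => by_contra fun hq => hq ?_, fun h => if_pos h⟩
  rw [merge_of_fire_ne_none hq] at h
  exact fire_eq_none_iff.2 ⟨0, h⟩

lemma fire_of_not_inWindow {t : Bool} {q : Cell K S} (h : ¬InWindow t q) :
    fire q = some (rot q) := by
  simp only [InWindow, not_or] at h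
  rcases q with _ | ⟨i, _ | d⟩
  · exact absurd rfl h.2.2
  · simp only [fire, rot, if_neg (show i ≠ 0 from h.2.1)]
  · simp only [fire, rot, if_neg (show i ≠ 0 from h.2.1), if_neg (show i ≠ 1 from h.2.2)]

lemma fire_reset_ne_none (q : Cell K S) : fire (reset q) ≠ none := by
  rw [ne_eq, fire_eq_none_iff]
  unfold reset
  split_ifs with h <;> simp [h]

variable {t : Bool} {e : ℕ}

lemma inWindow_merge {q : Cell K S} : InWindow t (merge q) ↔ InWindow t q := by
  simp only [InWindow, loc_merge]

lemma upper_of_not_inWindow {q : Cell K S} (h : ¬InWindow t q) : upper t e q = .inl q := by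
  rw [upper, dif_neg (by rwa [inWindow_merge]),
    merge_of_fire_ne_none (by simp [fire_of_not_inWindow h])]

lemma upper_of_inWindow {q : Cell K S} (h : InWindow t q) :
    upper t e q = .inr (.inl ⟨merge q, inWindow_merge.2 h⟩) := dif_pos _

lemma trans_upper_zero (q : Cell K S) :
    trans t e (upper t e q) 0 = (fire q).map (lift t e false) := by
  by_cases h : InWindow t q
  · rw [upper_of_inWindow h]
    simp only [trans, merge_eq_iff]
    split_ifs with hq
    · simp [hq]
    · obtain ⟨q', hq'⟩ := Option.ne_none_iff_exists'.1 hq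
      simp [merge_of_fire_ne_none hq, hq', lift]
  · rw [upper_of_not_inWindow h, fire_of_not_inWindow h]
    rfl

lemma trans_upper_one (q : Cell K S) :
    trans t e (upper t e q) 1 = some (upper t e (if t then reset q else q)) := by
  by_cases h : InWindow t q
  · rw [upper_of_inWindow h]
    simp only [trans, reset_merge]
    split_ifs
    · rfl
    · rw [upper_of_inWindow h]
  · have ht : ¬t = true := fun ht => h (.inl ht)
    rw [upper_of_not_inWindow h, if_neg ht]
    rfl

lemma trans_upper_two (q : Cell K S) : trans t e (upper t e q) 2 = some (.inl (reset q)) := by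
  by_cases h : InWindow t q
  · rw [upper_of_inWindow h]
    simp only [trans, reset_merge]
  · rw [upper_of_not_inWindow h]
    rfl

lemma trans_step (φ : Bool) (l : Fin 3) : ∃ φ' e', IsMove e' ∧
    ∀ q : Cell K S, trans t e (lift t e φ q) l = (e' q).map (lift t e φ') := by
  fin_cases l <;> cases φ
  · exact ⟨false, some ∘ rot, .inr (.inl rfl), fun q => rfl⟩
  · exact ⟨false, fire, .inr (.inr (.inl rfl)), trans_upper_zero⟩
  · exact ⟨true, some, .inl rfl, fun q => rfl⟩
  · cases t
    · exact ⟨true, some, .inl rfl, trans_upper_one⟩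
    · exact ⟨true, some ∘ reset, .inr (.inr (.inr rfl)), trans_upper_one⟩
  · exact ⟨false, some ∘ reset, .inr (.inr (.inr rfl)), fun q => rfl⟩
  · exact ⟨false, some ∘ reset, .inr (.inr (.inr rfl)), trans_upper_two⟩

lemma eq_marker_of_lift_eq {φ : Bool} {i : ZMod (K + 3)} {q : Cell K S}
    (h : lift t e φ q = lift t e φ (some (i, none))) : q = some (i, none) := by
  have hm : fire (some (i, none) : Cell K S) ≠ none := by simp [fire_eq_none_iff]
  cases φ
  · exact Sum.inl_injective h
  · have : merge q = merge (some (i, none)) := by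
      simp only [lift, upper] at h
      split_ifs at h <;> simpa using h
    rw [merge_of_fire_ne_none hm] at this
    rwa [merge_of_fire_ne_none fun hq => ?_] at this
    rw [merge_eq_iff.2 hq] at this
    simp at this

theorem simulates_three : Simulates (trans (K := K) (S := S) false e) (lift false e) where
  step := trans_step
  marker _ _ _ := eq_marker_of_lift_eq
  rotate := ⟨[0], fun _ => rfl⟩
  carry := ⟨[1, 0], trans_upper_zero⟩
  restart := ⟨[2, 1, 0], fun q => trans_upper_zero (reset q)⟩
  collect := ⟨[2], fun q => by rcases q with q | w | j <;> exact ⟨_, rfl⟩⟩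

theorem simulates_two :
    Simulates (fun q (l : Fin 2) => trans (K := K) (S := S) true e q l.castSucc) (lift true e) where
  step φ l := trans_step φ l.castSucc
  marker _ _ _ := eq_marker_of_lift_eq
  rotate := ⟨[0], fun _ => rfl⟩
  carry := ⟨[1, 0], fun q => trans_upper_zero (t := true) (e := e) q⟩
  restart := ⟨[1, 1, 0], fun q => by
    change ((trans true e (upper true e q) 1).bind fun q => trans true e q 0) = _
    rw [trans_upper_one]
    exact trans_upper_zero (t := true) (e := e) (reset q)⟩
  collect := ⟨[1, 1, 0], fun q => by
    have key : ∀ q : Cell K S, ∃ c,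
        ((trans true e (upper true e q) 1).bind fun q => trans true e q 0) = some (.inl c) := by
      intro q
      obtain ⟨c, hc⟩ := Option.ne_none_iff_exists'.1 (fire_reset_ne_none q)
      refine ⟨c, ?_⟩
      rw [trans_upper_one, if_pos rfl, Option.bind_some, trans_upper_zero, hc]
      rfl
    rcases q with q | w | j
    · exact key q
    · exact key (reset w.1)
    · obtain ⟨c, hc⟩ := Option.ne_none_iff_exists'.1 (show fire (none : Cell K S) ≠ none by
        simp [fire])
      refine ⟨c, ?_⟩
      change trans true e (upper true e none) 0 = _
      rw [trans_upper_zero, hc]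
      rfl⟩

lemma trans_eq_none_iff {q : Mach t K S e} {l : Fin 3} : trans t e q l = none ↔
    q = .inr (.inl ⟨some (1, some 0), .inr (.inr rfl)⟩) ∧ l = 0 := by
  rcases q with q | w | j
  · fin_cases l <;> simp [trans]
  · fin_cases l <;> simp [trans, Subtype.ext_iff]
  · fin_cases l <;> simp [trans]

lemma card_cell : Fintype.card (Cell K S) = (K + 3) * (S + 3) + 1 := by
  simp [ZMod.card]

lemma card_inWindow_le :
    Fintype.card {q : Cell K S // InWindow false q} ≤ 2 * (S + 3) + 1 := by
  let f : {q : Cell K S // InWindow false q} → Option (Bool × Option (Fin (S + 2))) :=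
    fun q => q.1.map fun x => (decide (x.1 = 0), x.2)
  have hf : Function.Injective f := by
    rintro ⟨_ | ⟨i, v⟩, h⟩ ⟨_ | ⟨i', v'⟩, h'⟩ hq
    · rfl
    · simp [f] at hq
    · simp [f] at hq
    · simp only [f, Option.map_some, Option.some.injEq, Prod.mk.injEq, decide_eq_decide] at hq
      simp only [InWindow, loc, Bool.false_eq_true, false_or] at h h'
      rcases h with rfl | rfl <;> rcases h' with rfl | rfl <;> simp_all
  simpa using Fintype.card_le_of_injective f hf

/-- A PFA that simulates a ring counter can be relabelled to have `Fin n` as its states. -/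
lemma Simulates.exists_fin {Q Λ : Type*} [Fintype Q] {δ : Q → Λ → Option Q}
    {f : Bool → Cell K S → Q} (h : Simulates δ f) (hu : ∃! p : Q × Λ, δ p.1 p.2 = none) {n : ℕ}
    (hn : Fintype.card Q = n) : ∃ δ' : Fin n → Λ → Option (Fin n),
      (∃! p : Fin n × Λ, δ' p.1 p.2 = none) ∧ (∃ w, IsCareSyncWord δ' w) ∧
        ∀ w, IsCareSyncWord δ' w → (S + 2) ^ (K + 2) ≤ w.length := by
  let g : Q ≃ Fin n := Fintype.equivFinOfCardEq hn
  let δ' : Fin n → Λ → Option (Fin n) := fun q l => (δ (g.symm q) l).map g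
  have run : ∀ (w : List Λ) q, pfaRun δ' (g q) w = (pfaRun δ q w).map g := by
    intro w q
    induction w using List.reverseRecOn with
    | nil => rfl
    | append_singleton w l ih =>
      rw [pfaRun_concat, pfaRun_concat, ih]
      cases pfaRun δ q w <;> simp [δ']
  have sync : ∀ w, IsCareSyncWord δ' w ↔ IsCareSyncWord δ w := by
    intro w
    unfold IsCareSyncWord
    rw [← g.exists_congr_right]
    refine exists_congr fun qs => ?_
    rw [← g.forall_congr_right]
    refine forall_congr' fun q => ?_
    rw [run]
    simp
  refine ⟨δ', ?_, by simpa only [sync] using h.exists_isCareSyncWord, fun w hw =>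
    h.le_length ((sync w).1 hw)⟩
  obtain ⟨p, hp, huniq⟩ := hu
  refine ⟨(g p.1, p.2), by simp [δ', hp], fun p' hp' => ?_⟩
  rw [← huniq (g.symm p'.1, p'.2) (by simpa [δ'] using hp')]
  simp

theorem exists_pfa_three {k n : ℕ} (hn : 4 * k + 22 ≤ n) :
    ∃ δ : Fin n → Fin 3 → Option (Fin n), (∃! p : Fin n × Fin 3, δ p.1 p.2 = none) ∧
      (∃ w, IsCareSyncWord δ w) ∧ ∀ w, IsCareSyncWord δ w → 3 ^ (k + 2) ≤ w.length := by
  have hc := card_inWindow_le (K := k) (S := 1)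
  refine (simulates_three (K := k) (S := 1)
    (e := n - (4 * k + 13 + Fintype.card {q : Cell k 1 // InWindow false q}))).exists_fin
    ⟨(_, 0), trans_eq_none_iff.2 ⟨rfl, rfl⟩, fun p hp => ?_⟩ ?_
  · exact Prod.ext_iff.2 (trans_eq_none_iff.1 hp)
  · rw [Fintype.card_sum, Fintype.card_sum, card_cell, Fintype.card_fin]
    omega

theorem exists_pfa_two {k n : ℕ} (hn : 10 * k + 32 ≤ n) :
    ∃ δ : Fin n → Fin 2 → Option (Fin n), (∃! p : Fin n × Fin 2, δ p.1 p.2 = none) ∧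
      (∃ w, IsCareSyncWord δ w) ∧ ∀ w, IsCareSyncWord δ w → 4 ^ (k + 2) ≤ w.length := by
  have hc := Fintype.card_subtype_le (InWindow (K := k) (S := 2) true)
  rw [card_cell] at hc
  refine (simulates_two (K := k) (S := 2)
    (e := n - (5 * k + 16 + Fintype.card {q : Cell k 2 // InWindow true q}))).exists_fin
    ⟨(_, 0), trans_eq_none_iff.2 ⟨rfl, rfl⟩, fun p hp => ?_⟩ ?_
  · obtain ⟨h1, h2⟩ := trans_eq_none_iff.1 hp
    exact Prod.ext h1 (Fin.castSucc_injective _ h2)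
  · rw [Fintype.card_sum, Fintype.card_sum, card_cell, Fintype.card_fin]
    omega

end RingCounter

/-- There are sequences of carefully synchronizing PFAs with exactly one undefined
transition and exponential shortest carefully synchronizing word length:
with three symbols and length `Ω(3^{n/7})`, and with two symbols and length
`Ω(2^{n/5})`. -/
theorem exists_single_undefined_pfa_exp :
    (∃ c : ℝ, 0 < c ∧ ∃ N : ℕ, ∀ n : ℕ, N ≤ n →
      ∃ δ : Fin n → Fin 3 → Option (Fin n),
        (∃! p : Fin n × Fin 3, δ p.1 p.2 = none) ∧
        (∃ w : List (Fin 3), IsCareSyncWord δ w) ∧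
        ∀ w : List (Fin 3), IsCareSyncWord δ w →
          c * (3 : ℝ) ^ ((n : ℝ) / 7) ≤ (w.length : ℝ)) ∧
    (∃ c' : ℝ, 0 < c' ∧ ∃ N' : ℕ, ∀ n : ℕ, N' ≤ n →
      ∃ δ : Fin n → Fin 2 → Option (Fin n),
        (∃! p : Fin n × Fin 2, δ p.1 p.2 = none) ∧
        (∃ w : List (Fin 2), IsCareSyncWord δ w) ∧
        ∀ w : List (Fin 2), IsCareSyncWord δ w →
          c' * (2 : ℝ) ^ ((n : ℝ) / 5) ≤ (w.length : ℝ)) := by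
  refine ⟨⟨1 / 27, by norm_num, 22, fun n hn => ?_⟩, ⟨1 / 32, by norm_num, 32, fun n hn => ?_⟩⟩
  · obtain ⟨k, hk, hk'⟩ : ∃ k, 4 * k + 22 ≤ n ∧ n ≤ 4 * k + 25 := ⟨(n - 22) / 4, by omega, by omega⟩
    obtain ⟨δ, h1, h2, h3⟩ := RingCounter.exists_pfa_three hk
    refine ⟨δ, h1, h2, fun w hw => le_trans ?_ (Nat.cast_le.2 (h3 w hw))⟩
    have : (3 : ℝ) ^ ((n : ℝ) / 7) ≤ 3 ^ ((k + 5 : ℕ) : ℝ) := by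
      refine Real.rpow_le_rpow_of_exponent_le (by norm_num) ?_
      have : (n : ℝ) ≤ 4 * k + 25 := by exact_mod_cast hk'
      push_cast
      linarith [(Nat.cast_nonneg k : (0 : ℝ) ≤ k)]
    rw [Real.rpow_natCast, show k + 5 = k + 2 + 3 by rfl, pow_add] at this
    push_cast
    linarith
  · obtain ⟨k, hk, hk'⟩ : ∃ k, 10 * k + 32 ≤ n ∧ n ≤ 10 * k + 41 :=
      ⟨(n - 32) / 10, by omega, by omega⟩
    obtain ⟨δ, h1, h2, h3⟩ := RingCounter.exists_pfa_two hk
    refine ⟨δ, h1, h2, fun w hw => le_trans ?_ (Nat.cast_le.2 (h3 w hw))⟩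
    have : (2 : ℝ) ^ ((n : ℝ) / 5) ≤ 2 ^ ((2 * (k + 2) + 5 : ℕ) : ℝ) := by
      refine Real.rpow_le_rpow_of_exponent_le (by norm_num) ?_
      have : (n : ℝ) ≤ 10 * k + 41 := by exact_mod_cast hk'
      push_cast
      linarith
    rw [Real.rpow_natCast, pow_add, pow_mul, show (2 : ℝ) ^ 2 = 4 by norm_num] at this
    push_cast
    linarith
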